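/- arXiv:0909.2264 — 4 statements merged into one kernel-verified Lean document; each statement's English description precedes it below -/
import Mathlib

section
/- Let M be a finite matroid of rank r on ground set E. For all commuting variables x, y, λ, ξ (equivalently, for all elements of any commutative ring), SC(M; x·y, λ·ξ) = ∑_{T ⊆ E} λ^{r − rk(T)} · (−y)^{|T|} · SC(M|T; −x, λ) · SC(M/T; y, ξ). -/
open Finset

/-- A finite matroid on ground set `E`, given by its rank function on finsets,
satisfying the standard rank axioms: the rank of a set is at most its cardinality,
rank is monotone, and rank is submodular. -/
structure FinMatroid (α : Type*) [DecidableEq α] where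
  E : Finset α
  rk : Finset α → ℕ
  rk_le_card : ∀ A ⊆ E, rk A ≤ A.card
  rk_mono : ∀ ⦃A B : Finset α⦄, A ⊆ B → B ⊆ E → rk A ≤ rk B
  rk_submod : ∀ ⦃A B : Finset α⦄, A ⊆ E → B ⊆ E →
    rk (A ∪ B) + rk (A ∩ B) ≤ rk A + rk B

/-- The (bivariate) size-corank polynomial of the matroid-like data given by
ground set `G`, rank function `f`, and normalizing rank `s`:
`SC = ∑_{A ⊆ G} x ^ |A| * l ^ (s - f A)`. -/
def SCsize {α R : Type*} [DecidableEq α] [CommRing R] (G : Finset α) (f : Finset α → ℕ)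
    (s : ℕ) (x l : R) : R :=
  ∑ A ∈ G.powerset, x ^ A.card * l ^ (s - f A)

/-!
On the right-hand side the coranks telescope and the sizes add up, so expanding both polynomials
gives a sum over chains `A ⊆ T ⊆ C ⊆ E` of `(-1) ^ |T|` times a factor which does not depend on `T`.
The alternating sum over `T ∈ [A, C]` vanishes unless `A = C`, and the diagonal terms form the
left-hand side.
-/

section BooleanLattice

variable {α : Type*} [DecidableEq α]

theorem sum_powerset_sdiff_union {N : Type*} [AddCommMonoid N] {S E : Finset α} (hSE : S ⊆ E)
    (g : Finset α → N) : ∑ B ∈ (E \ S).powerset, g (B ∪ S) = ∑ C ∈ Icc S E, g C :=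
  sum_nbij' (· ∪ S) (· \ S) (by grind) (by grind) (by grind) (by grind) fun _ _ => rfl

theorem sum_Icc_neg_one_pow_card {R : Type*} [Ring R] (A C : Finset α) :
    ∑ T ∈ Icc A C, (-1 : R) ^ #T = if A = C then (-1) ^ #A else 0 := by
  by_cases hAC : A ⊆ C
  · have card_union_left : ∀ B ∈ (C \ A).powerset, #(B ∪ A) = #B + #A := fun B hB =>
      card_union_of_disjoint (sdiff_disjoint.mono_left (mem_powerset.mp hB))
    calc ∑ T ∈ Icc A C, (-1 : R) ^ #T
        = ∑ B ∈ (C \ A).powerset, (-1 : R) ^ #(B ∪ A) := (sum_powerset_sdiff_union hAC _).symm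
      _ = ((∑ B ∈ (C \ A).powerset, (-1 : ℤ) ^ #B : ℤ) : R) * (-1) ^ #A := by
          push_cast
          rw [sum_mul]
          exact sum_congr rfl fun B hB => by rw [card_union_left B hB, pow_add]
      _ = if A = C then (-1) ^ #A else 0 := by
          have sdiff_eq_empty : C \ A = ∅ ↔ A = C := by
            rw [sdiff_eq_empty_iff_subset]
            exact ⟨hAC.antisymm, fun h => h.ge⟩
          simp [sum_powerset_neg_one_pow_card, sdiff_eq_empty]
  · rw [Icc_eq_empty hAC, sum_empty, if_neg fun h => hAC h.le]

theorem sum_chains_neg_one_pow_card_mul {R : Type*} [Ring R] (E : Finset α)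
    (g : Finset α → Finset α → R) :
    ∑ T ∈ E.powerset, ∑ A ∈ T.powerset, ∑ C ∈ Icc T E, (-1) ^ #T * g A C =
      ∑ A ∈ E.powerset, (-1) ^ #A * g A A :=
  calc
    _ = ∑ A ∈ E.powerset, ∑ T ∈ Icc A E, ∑ C ∈ Icc T E, (-1) ^ #T * g A C :=
        sum_comm' fun T A => by grind
    _ = ∑ A ∈ E.powerset, ∑ C ∈ Icc A E, ∑ T ∈ Icc A C, (-1) ^ #T * g A C :=
        sum_congr rfl fun A _ => sum_comm' fun T C => by grind
    _ = ∑ A ∈ E.powerset, ∑ C ∈ Icc A E, if A = C then (-1) ^ #A * g A C else 0 := by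
        simp only [← sum_mul, sum_Icc_neg_one_pow_card, ite_mul, zero_mul]
    _ = ∑ A ∈ E.powerset, (-1) ^ #A * g A A :=
        sum_congr rfl fun A hA => by
          rw [sum_ite_eq, if_pos (left_mem_Icc.mpr (mem_powerset.mp hA))]

end BooleanLattice

section SizeCorank

variable {α R : Type*} [DecidableEq α] [CommRing R] {E T : Finset α} {f : Finset α → ℕ}

theorem pow_mul_SCsize_restrict (hf : MonotoneOn f (Set.Iic E)) (hT : T ⊆ E) (x l : R) :
    l ^ (f E - f T) * SCsize T f (f T) x l = ∑ A ∈ T.powerset, x ^ #A * l ^ (f E - f A) := by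
  rw [SCsize, mul_sum]
  refine sum_congr rfl fun A hA => ?_
  have hAT : A ⊆ T := mem_powerset.mp hA
  have corank_add : f E - f T + (f T - f A) = f E - f A :=
    tsub_add_tsub_cancel (hf hT Set.self_mem_Iic hT) (hf (hAT.trans hT) hT hAT)
  rw [mul_left_comm, ← pow_add, corank_add]

theorem pow_card_mul_SCsize_contract (hf : MonotoneOn f (Set.Iic E)) (hT : T ⊆ E) (y ξ : R) :
    y ^ #T * SCsize (E \ T) (fun A => f (A ∪ T) - f T) (f E - f T) y ξ =
      ∑ C ∈ Icc T E, y ^ #C * ξ ^ (f E - f C) := by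
  rw [← sum_powerset_sdiff_union hT, SCsize, mul_sum]
  refine sum_congr rfl fun B hB => ?_
  have hBE : B ⊆ E \ T := mem_powerset.mp hB
  have card_add : #T + #B = #(B ∪ T) := by
    rw [card_union_of_disjoint (sdiff_disjoint.mono_left hBE), add_comm]
  have corank_sub : f E - f T - (f (B ∪ T) - f T) = f E - f (B ∪ T) :=
    tsub_tsub_tsub_cancel_right
      (hf hT (union_subset (hBE.trans sdiff_subset) hT) subset_union_right)
  rw [← mul_assoc, ← pow_add, card_add, corank_sub]

theorem convolution_summand_eq_sum_sum (hf : MonotoneOn f (Set.Iic E)) (hT : T ⊆ E)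
    (x y l ξ : R) :
    l ^ (f E - f T) * (-y) ^ #T * SCsize T f (f T) x l *
        SCsize (E \ T) (fun A => f (A ∪ T) - f T) (f E - f T) y ξ =
      ∑ A ∈ T.powerset, ∑ C ∈ Icc T E,
        (-1) ^ #T * (x ^ #A * l ^ (f E - f A) * (y ^ #C * ξ ^ (f E - f C))) := by
  simp only [← mul_sum, ← sum_mul]
  rw [← pow_mul_SCsize_restrict hf hT, ← pow_card_mul_SCsize_contract hf hT, neg_pow y]
  ring

theorem size_corank_convolution_general (hf : MonotoneOn f (Set.Iic E)) (x y l ξ : R) :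
    SCsize E f (f E) (x * y) (l * ξ) =
      ∑ T ∈ E.powerset,
        l ^ (f E - f T) * (-y) ^ #T * SCsize T f (f T) (-x) l *
          SCsize (E \ T) (fun A => f (A ∪ T) - f T) (f E - f T) y ξ := by
  symm
  calc
    _ = ∑ T ∈ E.powerset, ∑ A ∈ T.powerset, ∑ C ∈ Icc T E,
          (-1) ^ #T * ((-x) ^ #A * l ^ (f E - f A) * (y ^ #C * ξ ^ (f E - f C))) :=
        sum_congr rfl fun T hT =>
          convolution_summand_eq_sum_sum hf (mem_powerset.mp hT) (-x) y l ξ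
    _ = ∑ A ∈ E.powerset,
          (-1) ^ #A * ((-x) ^ #A * l ^ (f E - f A) * (y ^ #A * ξ ^ (f E - f A))) :=
        sum_chains_neg_one_pow_card_mul E _
    _ = ∑ A ∈ E.powerset, (x * y) ^ #A * (l * ξ) ^ (f E - f A) :=
        sum_congr rfl fun A _ => by
          have neg_one_pow_mul_neg_pow : (-1) ^ #A * (-x) ^ #A = x ^ #A := by
            rw [← mul_pow, neg_one_mul, neg_neg]
          rw [mul_pow x, mul_pow l, ← neg_one_pow_mul_neg_pow]
          ring

end SizeCorank

/-- Identity 2: the convolution-multiplication identity for the size-corank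
polynomial.  Here `M|T` is encoded by ground set `T` with the same rank function and
rank `rk T`, and `M/T` by ground set `E \\ T` with rank function
`A ↦ rk (A ∪ T) - rk T` and rank `rk E - rk T`. -/
theorem size_corank_convolution {α R : Type*} [DecidableEq α] [CommRing R]
    (M : FinMatroid α) (x y l ξ : R) :
    SCsize M.E M.rk (M.rk M.E) (x * y) (l * ξ) =
      ∑ T ∈ M.E.powerset,
        l ^ (M.rk M.E - M.rk T) * (-y) ^ T.card *
          SCsize T M.rk (M.rk T) (-x) l *
          SCsize (M.E \ T) (fun A => M.rk (A ∪ T) - M.rk T) (M.rk M.E - M.rk T) y ξ :=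
  size_corank_convolution_general (fun _ _ _ hB hAB => M.rk_mono hAB hB) x y l ξ
end

section
/- Let M be a finite matroid of rank r on ground set E. For all assignments of commuting variables x = (x_e)_{e∈E} and ξ (equivalently, for all elements of any commutative ring), SC(M; x, ξ) = ∑_{X flat of M} (∏_{e∈X} (x_e + 1)) · χ(M/X; ξ), where the sum ranges over all flats (closed sets) X of M. -/
open Finset

/-- The multivariate subset-corank polynomial of the matroid-like data given by
ground set `G`, rank function `f`, and normalizing rank `s`. -/
def SC {α R : Type*} [DecidableEq α] [CommRing R] (G : Finset α) (f : Finset α → ℕ)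
    (s : ℕ) (x : α → R) (l : R) : R :=
  ∑ A ∈ G.powerset, (∏ e ∈ A, x e) * l ^ (s - f A)

/-- The characteristic polynomial of the matroid-like data given by ground set `G`,
rank function `f`, and rank `s`: `χ = ∑_{A ⊆ G} (-1) ^ |A| * l ^ (s - f A)`. -/
def charPoly {α R : Type*} [DecidableEq α] [CommRing R] (G : Finset α) (f : Finset α → ℕ)
    (s : ℕ) (l : R) : R :=
  ∑ A ∈ G.powerset, (-1 : R) ^ A.card * l ^ (s - f A)

/-!
Expanding `∏ e ∈ A, x e = ∏ e ∈ A, ((x e + 1) - 1)` over the subsets `X` of `A` and exchanging the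
two sums writes the subset-corank polynomial as a sum over *all* subsets `X` of the ground set, with
the characteristic polynomial of `M / X` as coefficient. If `X` is not a flat, then `M / X` has a
loop `e`, and the terms of `A` and `insert e A` cancel in its characteristic polynomial.
-/

section PowersetSums

variable {α M R : Type*} [DecidableEq α]

theorem sum_powerset_sum_powerset_sdiff [AddCommMonoid M] (E : Finset α)
    (F : Finset α → Finset α → M) :
    ∑ B ∈ E.powerset, ∑ X ∈ B.powerset, F X (B \ X) =
      ∑ X ∈ E.powerset, ∑ A ∈ (E \ X).powerset, F X A := by
  rw [sum_sigma', sum_sigma']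
  refine sum_bij' (fun p _ ↦ ⟨p.2, p.1 \ p.2⟩) (fun p _ ↦ ⟨p.2 ∪ p.1, p.1⟩) ?_ ?_ ?_ ?_
    (fun _ _ ↦ rfl)
  all_goals simp only [mem_sigma, mem_powerset]
  · exact fun _ h ↦ ⟨h.2.trans h.1, sdiff_subset_sdiff h.1 le_rfl⟩
  · exact fun _ h ↦ ⟨union_subset (h.2.trans sdiff_subset) h.1, subset_union_right⟩
  · rintro ⟨B, X⟩ ⟨-, hXB⟩
    rw [sdiff_union_of_subset hXB]
  · rintro ⟨X, A⟩ ⟨-, hA⟩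
    rw [union_sdiff_cancel_right (disjoint_of_subset_left hA sdiff_disjoint)]

theorem prod_eq_sum_powerset_prod_add_one [CommRing R] (B : Finset α) (x : α → R) :
    ∏ e ∈ B, x e = ∑ X ∈ B.powerset, (∏ e ∈ X, (x e + 1)) * (-1) ^ #(B \ X) := by
  simpa using prod_add (fun e ↦ x e + 1) (fun _ ↦ -1) B

theorem sum_powerset_prod_mul_eq_sum_prod_add_one_mul [CommRing R] (E : Finset α) (x : α → R)
    (g : Finset α → R) :
    ∑ B ∈ E.powerset, (∏ e ∈ B, x e) * g B =
      ∑ X ∈ E.powerset, (∏ e ∈ X, (x e + 1)) *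
        ∑ A ∈ (E \ X).powerset, (-1) ^ #A * g (A ∪ X) := by
  calc ∑ B ∈ E.powerset, (∏ e ∈ B, x e) * g B
      = ∑ B ∈ E.powerset, ∑ X ∈ B.powerset,
          (∏ e ∈ X, (x e + 1)) * ((-1) ^ #(B \ X) * g (B \ X ∪ X)) := by
        refine sum_congr rfl fun B _ ↦ ?_
        rw [prod_eq_sum_powerset_prod_add_one, sum_mul]
        refine sum_congr rfl fun X hX ↦ ?_
        rw [sdiff_union_of_subset (mem_powerset.mp hX), mul_assoc]
    _ = ∑ X ∈ E.powerset, ∑ A ∈ (E \ X).powerset,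
          (∏ e ∈ X, (x e + 1)) * ((-1) ^ #A * g (A ∪ X)) :=
        sum_powerset_sum_powerset_sdiff E
          fun X A ↦ (∏ e ∈ X, (x e + 1)) * ((-1) ^ #A * g (A ∪ X))
    _ = _ := by simp only [mul_sum]

end PowersetSums

section CharPoly

variable {α R : Type*} [DecidableEq α] [CommRing R] {E X : Finset α} {f : Finset α → ℕ} {e : α}

theorem charPoly_eq_zero_of_loop (he : e ∈ E) (hloop : ∀ A ⊆ E, f (insert e A) = f A) (s : ℕ)
    (ξ : R) : charPoly E f s ξ = 0 := by
  rw [charPoly, ← insert_erase he, sum_powerset_insert (notMem_erase e E), ← sum_add_distrib]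
  refine sum_eq_zero fun A hA ↦ ?_
  have hAE : A ⊆ E.erase e := mem_powerset.mp hA
  have heA : e ∉ A := fun h ↦ notMem_erase e E (hAE h)
  rw [hloop A (hAE.trans (erase_subset e E)), card_insert_of_notMem heA]
  ring

theorem charPoly_contract (hmono : ∀ ⦃A B : Finset α⦄, A ⊆ B → B ⊆ E → f A ≤ f B) (hX : X ⊆ E)
    (s : ℕ) (ξ : R) :
    charPoly (E \ X) (fun A ↦ f (A ∪ X) - f X) (s - f X) ξ =
      ∑ A ∈ (E \ X).powerset, (-1) ^ #A * ξ ^ (s - f (A ∪ X)) := by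
  refine sum_congr rfl fun A hA ↦ ?_
  have hAX : A ∪ X ⊆ E := union_subset ((mem_powerset.mp hA).trans sdiff_subset) hX
  rw [tsub_tsub_tsub_cancel_right (hmono subset_union_right hAX)]

theorem SC_eq_sum_powerset_charPoly_contract
    (hmono : ∀ ⦃A B : Finset α⦄, A ⊆ B → B ⊆ E → f A ≤ f B) (s : ℕ) (x : α → R) (ξ : R) :
    SC E f s x ξ = ∑ X ∈ E.powerset, (∏ e ∈ X, (x e + 1)) *
      charPoly (E \ X) (fun A ↦ f (A ∪ X) - f X) (s - f X) ξ := by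
  rw [SC, sum_powerset_prod_mul_eq_sum_prod_add_one_mul E x fun A ↦ ξ ^ (s - f A)]
  exact sum_congr rfl fun X hX ↦ by rw [charPoly_contract hmono (mem_powerset.mp hX)]

end CharPoly

theorem insert_le_of_subset_of_submodular {α N : Type*} [DecidableEq α] [AddCommMonoid N]
    [PartialOrder N] [IsOrderedCancelAddMonoid N] {E A B : Finset α} {f : Finset α → N} {e : α}
    (hmono : ∀ ⦃A B : Finset α⦄, A ⊆ B → B ⊆ E → f A ≤ f B)
    (hsubmod : ∀ ⦃A B : Finset α⦄, A ⊆ E → B ⊆ E → f (A ∪ B) + f (A ∩ B) ≤ f A + f B)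
    (hAB : A ⊆ B) (hB : B ⊆ E) (he : e ∈ E) (heA : f (insert e A) ≤ f A) :
    f (insert e B) ≤ f B := by
  have hunion : B ∪ insert e A = insert e B := by rw [union_insert, union_eq_left.mpr hAB]
  have hinter : A ⊆ B ∩ insert e A := subset_inter hAB (subset_insert e A)
  refine le_of_add_le_add_right (a := f A) ?_
  calc f (insert e B) + f A
      ≤ f (B ∪ insert e A) + f (B ∩ insert e A) := by
        rw [hunion]
        gcongr
        exact hmono hinter (inter_subset_left.trans hB)
    _ ≤ f B + f (insert e A) := hsubmod hB (insert_subset he (hAB.trans hB))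
    _ ≤ f B + f A := by gcongr

/-- `hinsert` says that the closure `A ↦ {e ∈ E | f (insert e A) = f A}` is monotone in `A`. -/
theorem subset_corank_flat_sum_general {α R : Type*} [DecidableEq α] [CommRing R] {E : Finset α}
    {f : Finset α → ℕ} (hmono : ∀ ⦃A B : Finset α⦄, A ⊆ B → B ⊆ E → f A ≤ f B)
    (hinsert : ∀ ⦃A B : Finset α⦄ ⦃e : α⦄, A ⊆ B → B ⊆ E → e ∈ E →
      f (insert e A) ≤ f A → f (insert e B) ≤ f B)
    (x : α → R) (ξ : R) :
    SC E f (f E) x ξ =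
      ∑ X ∈ E.powerset with ∀ e ∈ E \ X, f X < f (insert e X),
        (∏ e ∈ X, (x e + 1)) *
          charPoly (E \ X) (fun A ↦ f (A ∪ X) - f X) (f E - f X) ξ := by
  rw [SC_eq_sum_powerset_charPoly_contract hmono, sum_filter_of_ne]
  intro X hX hne
  contrapose! hne
  obtain ⟨e, he, heX⟩ := hne
  have heE : e ∈ E := (mem_sdiff.mp he).1
  have hloop : ∀ A ⊆ E \ X, f (insert e A ∪ X) - f X = f (A ∪ X) - f X := by
    intro A hA
    have hAX : A ∪ X ⊆ E := union_subset (hA.trans sdiff_subset) (mem_powerset.mp hX)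
    rw [insert_union, (hinsert subset_union_right hAX heE heX).antisymm
      (hmono (subset_insert e _) (insert_subset heE hAX))]
  rw [charPoly_eq_zero_of_loop he hloop, mul_zero]

/-- Identity 5 (multivariate form): the subset-corank polynomial as a sum over flats
of weighted characteristic polynomials of contractions.  A flat of `M` is a subset `X`
of the ground set such that adjoining any element outside `X` strictly increases the
rank. -/
theorem subset_corank_flat_sum {α R : Type*} [DecidableEq α] [CommRing R]
    (M : FinMatroid α) (x : α → R) (ξ : R) :
    SC M.E M.rk (M.rk M.E) x ξ =
      ∑ X ∈ M.E.powerset.filter (fun X => ∀ e ∈ M.E \ X, M.rk X < M.rk (insert e X)),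
        (∏ e ∈ X, (x e + 1)) *
          charPoly (M.E \ X) (fun A => M.rk (A ∪ X) - M.rk X) (M.rk M.E - M.rk X) ξ :=
  subset_corank_flat_sum_general M.rk_mono
    (fun _ _ _ ↦ insert_le_of_subset_of_submodular M.rk_mono M.rk_submod) x ξ
end

section
/- Let M be a finite matroid of rank r on ground set E. For all assignments of commuting variables y = (y_e)_{e∈E} and λ (equivalently, for all elements of any commutative ring), SC(M; (−y_e)_{e∈E}, λ) = ∑_{T ⊆ E} λ^{r − rk(T)} · χ(M|T; λ) · (∏_{e∈T} y_e) · (∏_{e∈E∖T} (1 − y_e)). -/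
open Finset

/-!
Expand a multi-affine polynomial `∑ A ⊆ E, g A ∏_{e ∈ A} y e` in the multivariate Bernstein basis
`∏_{e ∈ T} y e ∏_{e ∈ E \ T} (1 - y e)`: since `∏_{e ∈ A} y e` is the sum of the basis elements
with `A ⊆ T ⊆ E`, the coefficient at `T` is `∑ A ⊆ T, g A`. For the subset-corank polynomial at
`-y` this coefficient is the characteristic polynomial of the restriction to `T`, except that it is
normalized by the rank of `E` instead of that of `T`, which accounts for the power of `l`.
-/

section Bernstein

variable {α R : Type*} [DecidableEq α]

theorem sum_Icc_prod_mul_prod_sdiff [CommSemiring R] {A E : Finset α} (hAE : A ⊆ E)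
    (p q : α → R) :
    ∑ T ∈ Icc A E, (∏ e ∈ T, p e) * ∏ e ∈ E \ T, q e =
      (∏ e ∈ A, p e) * ∏ e ∈ E \ A, (p e + q e) := by
  have union_injOn : Set.InjOn (A ∪ ·) ((E \ A).powerset : Set (Finset α)) := by
    intro S hS S' hS' (h : A ∪ S = A ∪ S')
    rw [mem_coe, mem_powerset, subset_sdiff] at hS hS'
    rw [← union_sdiff_cancel_left hS.2.symm, ← union_sdiff_cancel_left hS'.2.symm, h]
  rw [Icc_eq_image_powerset hAE, sum_image union_injOn, prod_add, mul_sum]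
  refine sum_congr rfl fun S hS => ?_
  have disj : Disjoint A S := (subset_sdiff.mp (mem_powerset.mp hS)).2.symm
  rw [prod_union disj, ← sup_eq_union, ← sdiff_sdiff_left, mul_assoc]

theorem sum_mul_prod_eq_sum_bernstein [CommRing R] (E : Finset α) (g : Finset α → R)
    (y : α → R) :
    ∑ A ∈ E.powerset, g A * ∏ e ∈ A, y e =
      ∑ T ∈ E.powerset,
        (∑ A ∈ T.powerset, g A) * ((∏ e ∈ T, y e) * ∏ e ∈ E \ T, (1 - y e)) := by
  have prod_eq {A : Finset α} (hAE : A ⊆ E) :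
      ∏ e ∈ A, y e = ∑ T ∈ Icc A E, (∏ e ∈ T, y e) * ∏ e ∈ E \ T, (1 - y e) := by
    simp [sum_Icc_prod_mul_prod_sdiff hAE]
  calc ∑ A ∈ E.powerset, g A * ∏ e ∈ A, y e
      = ∑ A ∈ E.powerset, ∑ T ∈ Icc A E,
          g A * ((∏ e ∈ T, y e) * ∏ e ∈ E \ T, (1 - y e)) :=
        sum_congr rfl fun A hA => by rw [prod_eq (mem_powerset.mp hA), mul_sum]
    _ = ∑ T ∈ E.powerset, ∑ A ∈ T.powerset,
          g A * ((∏ e ∈ T, y e) * ∏ e ∈ E \ T, (1 - y e)) :=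
        sum_comm' fun A T => by
          simp only [mem_powerset, mem_Icc]
          exact ⟨And.right, fun h => ⟨h.1.trans h.2, h⟩⟩
    _ = _ := by simp only [sum_mul]

end Bernstein

section Corank

variable {α R : Type*} [DecidableEq α] [CommRing R]

theorem SC_neg (E : Finset α) (f : Finset α → ℕ) (s : ℕ) (y : α → R) (l : R) :
    SC E f s (fun e => -y e) l =
      ∑ A ∈ E.powerset, ((-1) ^ A.card * l ^ (s - f A)) * ∏ e ∈ A, y e :=
  sum_congr rfl fun A _ => by rw [prod_neg, mul_right_comm]

theorem pow_mul_charPoly {T : Finset α} {f : Finset α → ℕ} {s t : ℕ}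
    (hf : ∀ A ⊆ T, f A ≤ t) (hts : t ≤ s) (l : R) :
    l ^ (s - t) * charPoly T f t l = charPoly T f s l := by
  rw [charPoly, mul_sum]
  refine sum_congr rfl fun A hA => ?_
  rw [mul_left_comm, ← pow_add, tsub_add_tsub_cancel hts (hf A (mem_powerset.mp hA))]

theorem subset_corank_restriction_char_sum_general {E : Finset α} {f : Finset α → ℕ}
    (hf : MonotoneOn f (Set.Iic E)) {s : ℕ} (hs : f E ≤ s) (y : α → R) (l : R) :
    SC E f s (fun e => -y e) l =
      ∑ T ∈ E.powerset,
        l ^ (s - f T) * charPoly T f (f T) l * (∏ e ∈ T, y e) * (∏ e ∈ E \ T, (1 - y e)) := by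
  rw [SC_neg, sum_mul_prod_eq_sum_bernstein]
  refine sum_congr rfl fun T hT => ?_
  have hTE : T ⊆ E := mem_powerset.mp hT
  have hfT : ∀ A ⊆ T, f A ≤ f T := fun A hAT => hf (hAT.trans hTE) hTE hAT
  have hTs : f T ≤ s := (hf hTE Set.self_mem_Iic hTE).trans hs
  rw [pow_mul_charPoly hfT hTs, mul_assoc, charPoly]

end Corank

/-- Identity 6: the subset-corank polynomial at `-y` as a weighted sum of
characteristic polynomials of restrictions. -/
theorem subset_corank_restriction_char_sum {α R : Type*} [DecidableEq α] [CommRing R]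
    (M : FinMatroid α) (y : α → R) (l : R) :
    SC M.E M.rk (M.rk M.E) (fun e => -y e) l =
      ∑ T ∈ M.E.powerset,
        l ^ (M.rk M.E - M.rk T) * charPoly T M.rk (M.rk T) l *
          (∏ e ∈ T, y e) * (∏ e ∈ M.E \ T, (1 - y e)) :=
  subset_corank_restriction_char_sum_general (fun _ _ _ hB hAB => M.rk_mono hAB hB) le_rfl y l
end

section
/- Let M be a finite matroid of rank r on ground set E. For all commuting variables x and ξ (equivalently, for all elements of any commutative ring), R(M; x, ξ) = ∑_{T cyclic flat of M} R(M|T; x, −1) · R(M/T; −1, ξ), where the sum ranges over all cyclic flats T of M, i.e., flats T such that the restriction M|T has no coloops. -/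
open Finset

/-- The nullity-corank (rank generating) polynomial of the matroid-like data given by
ground set `G`, rank function `f`, and normalizing rank `s`:
`R = ∑_{A ⊆ G} x ^ (|A| - f A) * l ^ (s - f A)`. -/
def RG {α R : Type*} [DecidableEq α] [CommRing R] (G : Finset α) (f : Finset α → ℕ)
    (s : ℕ) (x l : R) : R :=
  ∑ A ∈ G.powerset, x ^ (A.card - f A) * l ^ (s - f A)

/-!
Expanding the factors belonging to `T` turns the convolution over all `T ⊆ E` into a sum over
chains `A ⊆ T ⊆ B ⊆ E`. The terms of a chain depend on `T` only through the sign `(-1) ^ |T \ A|`,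
so for fixed `A` and `B` the sum over `T` cancels unless `A = B`, and what is left is the sum
defining `R(M)`. Weighting the terms suitably gives Kung's convolution-multiplication identity, of
which the case needed here is that of trivial weights.

To restrict the sum to cyclic flats: a coloop of `M|T` contributes a factor `λ + 1` to
`R(M|T; x, λ)`, which vanishes at `λ = -1`. If `T` is not a flat, then `M/T` has a loop, which
contributes a factor `x + 1` to `R(M/T; x, ξ)`.
-/

section BooleanLattice

variable {α R : Type*} [DecidableEq α]

theorem sum_Icc_eq_sum_powerset_sdiff {N : Type*} [AddCommMonoid N] {A B : Finset α}
    (hAB : A ⊆ B) (f : Finset α → N) :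
    ∑ T ∈ Icc A B, f T = ∑ S ∈ (B \ A).powerset, f (A ∪ S) := by
  rw [Icc_eq_image_powerset hAB, sum_image]
  have union_sdiff_self : ∀ S ∈ (B \ A).powerset, (A ∪ S) \ A = S := fun S hS =>
    union_sdiff_cancel_left (disjoint_sdiff.mono_right (mem_powerset.1 hS))
  intro S hS S' hS' h
  rw [← union_sdiff_self S hS, ← union_sdiff_self S' hS']
  exact congrArg (· \ A) h

theorem sum_Icc_neg_one_pow_card_sdiff [Ring R] {A B : Finset α} (hAB : A ⊆ B) :
    ∑ T ∈ Icc A B, (-1 : R) ^ (T \ A).card = if A = B then 1 else 0 := by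
  have sum_powerset : ∑ S ∈ (B \ A).powerset, (-1 : R) ^ S.card = if B \ A = ∅ then 1 else 0 := by
    exact_mod_cast congrArg (Int.cast (R := R)) (sum_powerset_neg_one_pow_card (x := B \ A))
  have sdiff_eq_empty : B \ A = ∅ ↔ A = B :=
    sdiff_eq_empty_iff_subset.trans ⟨hAB.antisymm, fun h => h.ge⟩
  simp only [← sdiff_eq_empty]
  rw [← sum_powerset, sum_Icc_eq_sum_powerset_sdiff hAB]
  refine sum_congr rfl fun S hS => ?_
  rw [union_sdiff_cancel_left (disjoint_sdiff.mono_right (mem_powerset.1 hS))]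

theorem sum_chains_neg_one_pow_card_sdiff_mul [Ring R] (E : Finset α)
    (F : Finset α → Finset α → R) :
    ∑ T ∈ E.powerset, ∑ A ∈ T.powerset, ∑ B ∈ Icc T E, (-1) ^ (T \ A).card * F A B =
      ∑ A ∈ E.powerset, F A A := by
  calc
    _ = ∑ A ∈ E.powerset, ∑ T ∈ Icc A E, ∑ B ∈ Icc T E, (-1) ^ (T \ A).card * F A B :=
      sum_comm' fun T A => by
        simp only [mem_powerset, mem_Icc]
        exact ⟨fun h => ⟨⟨h.2, h.1⟩, h.2.trans h.1⟩, fun h => ⟨h.1.2, h.1.1⟩⟩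
    _ = ∑ A ∈ E.powerset, ∑ B ∈ Icc A E, ∑ T ∈ Icc A B, (-1) ^ (T \ A).card * F A B :=
      sum_congr rfl fun A _ => sum_comm' fun T B => by
        simp only [mem_Icc]
        exact ⟨fun h => ⟨⟨h.1.1, h.2.1⟩, h.1.1.trans h.2.1, h.2.2⟩,
          fun h => ⟨⟨h.1.1, h.1.2.trans h.2.2⟩, h.1.2, h.2.2⟩⟩
    _ = ∑ A ∈ E.powerset, ∑ B ∈ Icc A E, if A = B then F A B else 0 :=
      sum_congr rfl fun A _ => sum_congr rfl fun B hB => by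
        rw [← sum_mul, sum_Icc_neg_one_pow_card_sdiff (mem_Icc.1 hB).1, ite_mul, one_mul, zero_mul]
    _ = ∑ A ∈ E.powerset, F A A :=
      sum_congr rfl fun A hA => by
        rw [sum_ite_eq, if_pos (left_mem_Icc.2 (mem_powerset.1 hA))]

end BooleanLattice

namespace FinMatroid

variable {α R : Type*} [DecidableEq α] [CommRing R] (M : FinMatroid α)
variable {A B T : Finset α} {e : α}

theorem rk_union_le_card_add (hA : A ⊆ M.E) (hT : T ⊆ M.E) :
    M.rk (A ∪ T) ≤ A.card + M.rk T := by
  have submod := M.rk_submod hA hT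
  have le_card := M.rk_le_card A hA
  omega

/-- The nullity of a set, the exponent of the first variable of `RG`. The subtraction is exact for
`A ⊆ M.E`. -/
def nullity (A : Finset α) : ℕ := A.card - M.rk A

/-- The corank of a set, the exponent of the second variable of `RG`. The subtraction is exact for
`A ⊆ M.E`. -/
def corank (A : Finset α) : ℕ := M.rk M.E - M.rk A

theorem nullity_mono (hAB : A ⊆ B) (hB : B ⊆ M.E) : M.nullity A ≤ M.nullity B := by
  have rk_le := M.rk_union_le_card_add (sdiff_subset.trans hB : B \ A ⊆ M.E) (hAB.trans hB)
  rw [sdiff_union_of_subset hAB] at rk_le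
  have card_eq := card_sdiff_add_card_eq_card hAB
  have le_card := M.rk_le_card A (hAB.trans hB)
  unfold nullity
  omega

theorem corank_anti (hAB : A ⊆ B) (hB : B ⊆ M.E) : M.corank B ≤ M.corank A :=
  Nat.sub_le_sub_left (M.rk_mono hAB hB) _

theorem nullity_add_corank (hAB : A ⊆ B) (hB : B ⊆ M.E) :
    M.nullity B + M.corank A = M.nullity A + M.corank B + (B \ A).card := by
  have card_eq := card_sdiff_add_card_eq_card hAB
  have le_card_A := M.rk_le_card A (hAB.trans hB)
  have le_card_B := M.rk_le_card B hB
  have mono_A := M.rk_mono hAB hB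
  have mono_B := M.rk_mono hB subset_rfl
  unfold nullity corank
  omega

/-- The restriction `M|T`, for subsets `T` of the ground set only. -/
def restrict (hT : T ⊆ M.E) : FinMatroid α where
  E := T
  rk := M.rk
  rk_le_card A hA := M.rk_le_card A (hA.trans hT)
  rk_mono _ _ hAB hB := M.rk_mono hAB (hB.trans hT)
  rk_submod _ _ hA hB := M.rk_submod (hA.trans hT) (hB.trans hT)

/-- The contraction `M/T`, for subsets `T` of the ground set only. -/
def contract (hT : T ⊆ M.E) : FinMatroid α where
  E := M.E \ T
  rk A := M.rk (A ∪ T) - M.rk T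
  rk_le_card A hA := by
    have rk_le := M.rk_union_le_card_add (hA.trans sdiff_subset) hT
    omega
  rk_mono A B hAB hB := Nat.sub_le_sub_right
    (M.rk_mono (union_subset_union_left hAB) (union_subset (hB.trans sdiff_subset) hT)) _
  rk_submod A B hA hB := by
    have hAT : A ∪ T ⊆ M.E := union_subset (hA.trans sdiff_subset) hT
    have hBT : B ∪ T ⊆ M.E := union_subset (hB.trans sdiff_subset) hT
    have submod := M.rk_submod hAT hBT
    rw [← union_union_distrib_right, ← inter_union_distrib_right] at submod
    have inter_subset : A ∩ B ∪ T ⊆ M.E :=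
      (union_subset_union_left inter_subset_left).trans hAT
    have le_inter := M.rk_mono subset_union_right inter_subset
    have le_union := M.rk_mono (subset_union_right : T ⊆ A ∪ B ∪ T)
      (union_union_distrib_right A B T ▸ union_subset hAT hBT)
    have le_left := M.rk_mono subset_union_right hAT
    have le_right := M.rk_mono subset_union_right hBT
    omega

theorem rk_contract_ground (hT : T ⊆ M.E) :
    (M.contract hT).rk (M.contract hT).E = M.rk M.E - M.rk T := by
  simp only [contract, sdiff_union_of_subset hT]

theorem RG_restrict_eq_sum (x l : R) (hT : T ⊆ M.E) :
    RG T M.rk (M.rk T) x l =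
      ∑ A ∈ T.powerset, x ^ M.nullity A * l ^ (M.corank A - M.corank T) := by
  refine sum_congr rfl fun A hA => ?_
  have mono_A := M.rk_mono (mem_powerset.1 hA) hT
  have mono_T := M.rk_mono hT subset_rfl
  have corank_sub : M.rk T - M.rk A = M.corank A - M.corank T := by
    unfold corank
    omega
  rw [corank_sub, nullity]

theorem RG_contract_eq_sum (x l : R) (hT : T ⊆ M.E) :
    RG (M.E \ T) (fun A => M.rk (A ∪ T) - M.rk T) (M.rk M.E - M.rk T) x l =
      ∑ B ∈ Icc T M.E, x ^ (M.nullity B - M.nullity T) * l ^ M.corank B := by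
  rw [sum_Icc_eq_sum_powerset_sdiff hT]
  refine sum_congr rfl fun A hA => ?_
  have hA := mem_powerset.1 hA
  rw [union_comm T A]
  have card_eq : (A ∪ T).card = A.card + T.card :=
    card_union_of_disjoint (sdiff_disjoint.mono_left hA)
  have mono_T := M.rk_mono subset_union_right (union_subset (hA.trans sdiff_subset) hT)
  have le_card := M.rk_le_card T hT
  have nullity_sub :
      A.card - (M.rk (A ∪ T) - M.rk T) = M.nullity (A ∪ T) - M.nullity T := by
    unfold nullity
    omega
  have corank_eq : M.rk M.E - M.rk T - (M.rk (A ∪ T) - M.rk T) = M.corank (A ∪ T) := by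
    unfold corank
    omega
  rw [nullity_sub, corank_eq]

theorem convolution_term_eq (x y l ξ : R) (hAT : A ⊆ T) (hTB : T ⊆ B) (hB : B ⊆ M.E) :
    l ^ M.corank T * (-y) ^ M.nullity T *
        ((-x) ^ M.nullity A * (-l) ^ (M.corank A - M.corank T) *
          (y ^ (M.nullity B - M.nullity T) * ξ ^ M.corank B)) =
      (-1) ^ (T \ A).card *
        (x ^ M.nullity A * y ^ M.nullity B * (l ^ M.corank A * ξ ^ M.corank B)) := by
  have hT := hTB.trans hB
  obtain ⟨p, hp⟩ := Nat.exists_eq_add_of_le (M.nullity_mono hAT hT)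
  obtain ⟨q, hq⟩ := Nat.exists_eq_add_of_le (M.corank_anti hAT hT)
  obtain ⟨s, hs⟩ := Nat.exists_eq_add_of_le (M.nullity_mono hTB hB)
  have card_eq : (T \ A).card = p + q := by
    have := M.nullity_add_corank hAT hT
    omega
  have sign_sq : (-1 : R) ^ M.nullity A * (-1) ^ M.nullity A = 1 := by
    rw [← mul_pow, neg_one_mul, neg_neg, one_pow]
  rw [card_eq, hs, hq, Nat.add_sub_cancel_left, Nat.add_sub_cancel_left, hp,
    neg_pow x, neg_pow y, neg_pow l]
  simp only [pow_add]
  linear_combination (x ^ M.nullity A * y ^ M.nullity A * y ^ p * y ^ s * l ^ M.corank T * l ^ q *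
    ξ ^ M.corank B * (-1) ^ p * (-1) ^ q) * sign_sq

theorem RG_mul_mul_eq_sum_powerset (x y l ξ : R) :
    RG M.E M.rk (M.rk M.E) (x * y) (l * ξ) =
      ∑ T ∈ M.E.powerset, l ^ M.corank T * (-y) ^ M.nullity T *
        (RG T M.rk (M.rk T) (-x) (-l) *
          RG (M.E \ T) (fun A => M.rk (A ∪ T) - M.rk T) (M.rk M.E - M.rk T) y ξ) := by
  symm
  calc
    _ = ∑ T ∈ M.E.powerset, ∑ A ∈ T.powerset, ∑ B ∈ Icc T M.E, (-1) ^ (T \ A).card *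
          (x ^ M.nullity A * y ^ M.nullity B * (l ^ M.corank A * ξ ^ M.corank B)) := by
      refine sum_congr rfl fun T hT => ?_
      have hT := mem_powerset.1 hT
      rw [M.RG_restrict_eq_sum _ _ hT, M.RG_contract_eq_sum _ _ hT, sum_mul_sum, mul_sum]
      refine sum_congr rfl fun A hA => ?_
      rw [mul_sum]
      refine sum_congr rfl fun B hB => ?_
      exact M.convolution_term_eq x y l ξ (mem_powerset.1 hA) (mem_Icc.1 hB).1 (mem_Icc.1 hB).2
    _ = ∑ A ∈ M.E.powerset,
          x ^ M.nullity A * y ^ M.nullity A * (l ^ M.corank A * ξ ^ M.corank A) :=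
      sum_chains_neg_one_pow_card_sdiff_mul M.E _
    _ = RG M.E M.rk (M.rk M.E) (x * y) (l * ξ) := by
      simp only [RG, nullity, corank, mul_pow]

theorem rk_insert_of_coloop (he : e ∈ M.E) (hcoloop : M.rk (M.E.erase e) < M.rk M.E)
    (hA : A ⊆ M.E.erase e) : M.rk (insert e A) = M.rk A + 1 := by
  have hAE : A ⊆ M.E := hA.trans (erase_subset e M.E)
  have union_eq : insert e A ∪ M.E.erase e = M.E := by
    rw [insert_union, union_eq_right.2 hA, insert_erase he]
  have inter_eq : insert e A ∩ M.E.erase e = A := by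
    rw [insert_inter_of_notMem (notMem_erase e M.E), inter_eq_left.2 hA]
  have submod := M.rk_submod (insert_subset he hAE) (erase_subset e M.E)
  rw [union_eq, inter_eq] at submod
  have le_add_one := M.rk_union_le_card_add (singleton_subset_iff.2 he) hAE
  rw [← insert_eq, card_singleton] at le_add_one
  omega

theorem rk_insert_of_loop (he : e ∈ M.E) (hloop : M.rk {e} = 0) (hA : A ⊆ M.E) :
    M.rk (insert e A) = M.rk A := by
  have submod := M.rk_submod (singleton_subset_iff.2 he) hA
  rw [← insert_eq, hloop] at submod
  have mono := M.rk_mono (subset_insert e A) (insert_subset he hA)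
  omega

theorem RG_eq_sum_powerset_erase (x l : R) (he : e ∈ M.E) :
    RG M.E M.rk (M.rk M.E) x l = ∑ A ∈ (M.E.erase e).powerset,
      (x ^ (A.card - M.rk A) * l ^ (M.rk M.E - M.rk A) +
        x ^ (A.card + 1 - M.rk (insert e A)) * l ^ (M.rk M.E - M.rk (insert e A))) := by
  rw [RG, sum_add_distrib]
  conv_lhs => rw [← insert_erase he, sum_powerset_insert (notMem_erase e M.E), insert_erase he]
  congr 1
  refine sum_congr rfl fun A hA => ?_
  rw [card_insert_of_notMem fun h => notMem_erase e M.E (mem_powerset.1 hA h)]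

theorem RG_eq_mul_of_coloop (x l : R) (he : e ∈ M.E) (hcoloop : M.rk (M.E.erase e) < M.rk M.E) :
    RG M.E M.rk (M.rk M.E) x l =
      (l + 1) * RG (M.E.erase e) M.rk (M.rk (M.E.erase e)) x l := by
  rw [M.RG_eq_sum_powerset_erase x l he, RG, mul_sum]
  refine sum_congr rfl fun A hA => ?_
  have hA := mem_powerset.1 hA
  have rk_ground : M.rk M.E = M.rk (M.E.erase e) + 1 := by
    rw [← M.rk_insert_of_coloop he hcoloop subset_rfl, insert_erase he]
  have rk_le := M.rk_mono hA (erase_subset e M.E)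
  rw [M.rk_insert_of_coloop he hcoloop hA, rk_ground, Nat.add_sub_add_right,
    Nat.add_sub_add_right, Nat.sub_add_comm rk_le, pow_succ]
  ring

theorem RG_eq_mul_of_loop (x l : R) (he : e ∈ M.E) (hloop : M.rk {e} = 0) :
    RG M.E M.rk (M.rk M.E) x l =
      (x + 1) * RG (M.E.erase e) M.rk (M.rk (M.E.erase e)) x l := by
  rw [M.RG_eq_sum_powerset_erase x l he, RG, mul_sum]
  refine sum_congr rfl fun A hA => ?_
  have hAE : A ⊆ M.E := (mem_powerset.1 hA).trans (erase_subset e M.E)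
  have rk_ground : M.rk M.E = M.rk (M.E.erase e) := by
    rw [← M.rk_insert_of_loop he hloop (erase_subset e M.E), insert_erase he]
  rw [M.rk_insert_of_loop he hloop hAE, rk_ground, Nat.sub_add_comm (M.rk_le_card A hAE), pow_succ]
  ring

theorem RG_restrict_neg_one_eq_zero (x : R) (hT : T ⊆ M.E) (he : e ∈ T)
    (hne : M.rk (T.erase e) ≠ M.rk T) : RG T M.rk (M.rk T) x (-1) = 0 := by
  have hcoloop : M.rk (T.erase e) < M.rk T := (M.rk_mono (erase_subset e T) hT).lt_of_ne hne
  simpa [restrict] using (M.restrict hT).RG_eq_mul_of_coloop x (-1) he hcoloop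

theorem RG_contract_neg_one_eq_zero (ξ : R) (hT : T ⊆ M.E) (he : e ∈ M.E \ T)
    (hle : M.rk (insert e T) ≤ M.rk T) :
    RG (M.E \ T) (fun A => M.rk (A ∪ T) - M.rk T) (M.rk M.E - M.rk T) (-1) ξ = 0 := by
  have hloop : (M.contract hT).rk {e} = 0 := Nat.sub_eq_zero_of_le hle
  have hzero := (M.contract hT).RG_eq_mul_of_loop (-1) ξ he hloop
  rwa [rk_contract_ground, neg_add_cancel, zero_mul] at hzero

end FinMatroid

/-- The Kook–Reiner–Stanton / Étienne–Las Vergnas convolution identity with the sum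
restricted to cyclic flats: flats `T` (subsets such that adjoining any outside element
strictly increases the rank) such that `M|T` has no coloops (removing any element of
`T` does not decrease the rank). -/
theorem rank_generating_KRSEV_cyclic_flats {α R : Type*} [DecidableEq α] [CommRing R]
    (M : FinMatroid α) (x ξ : R) :
    RG M.E M.rk (M.rk M.E) x ξ =
      ∑ T ∈ M.E.powerset.filter (fun T =>
          (∀ e ∈ M.E \ T, M.rk T < M.rk (insert e T)) ∧
          (∀ e ∈ T, M.rk (T.erase e) = M.rk T)),
        RG T M.rk (M.rk T) x (-1) *
          RG (M.E \ T) (fun A => M.rk (A ∪ T) - M.rk T) (M.rk M.E - M.rk T) (-1) ξ := by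
  have convolution := M.RG_mul_mul_eq_sum_powerset (-x) (-1) 1 ξ
  simp only [neg_mul_neg, mul_one, one_mul, neg_neg, one_pow] at convolution
  rw [convolution]
  refine (sum_subset (filter_subset _ _) fun T hT hcyclic => ?_).symm
  have hTE := mem_powerset.1 hT
  rw [mem_filter, not_and, not_and_or] at hcyclic
  rcases hcyclic hT with hflat | hcoloop
  · push Not at hflat
    obtain ⟨e, he, hle⟩ := hflat
    rw [M.RG_contract_neg_one_eq_zero ξ hTE he hle, mul_zero]
  · push Not at hcoloop
    obtain ⟨e, he, hne⟩ := hcoloop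
    rw [M.RG_restrict_neg_one_eq_zero x hTE he hne, zero_mul]
end
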